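/- Let L ∈ 𝒩. Then there exist λ ∈ ℂ and three times continuously differentiable functions θ, u : [0,L] → ℂ, not both identically zero, satisfying −u′(x) − u‴(x) = λ·θ(x) and −θ′(x) − θ‴(x) = λ·u(x) for all x ∈ [0,L], the boundary conditions θ(0) = θ(L) = θ′(0) = θ′(L) = 0 and u(0) = u(L) = u′(L) = 0, and additionally θ″(L) = 0. -/

import Mathlib

open Set

/-- The set 𝒩 = { (2π/√3)·√(k² + k·l + l²) : k, l positive integers } of critical lengths. -/
def criticalN : Set ℝ :=
  {x | ∃ k l : ℕ, 0 < k ∧ 0 < l ∧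
    x = (2 * Real.pi / Real.sqrt 3) * Real.sqrt ((k : ℝ)^2 + (k : ℝ) * (l : ℝ) + (l : ℝ)^2)}

/-!
The sum and the difference of `θ` and `u` decouple the system: with `θ = w - v` and `u = w + v` it
becomes `-w′ - w‴ = λ w` and `-v′ - v‴ = -λ v`. The operator is odd under `x ↦ L - x`, so
`v = ρ w(L - ·)` solves the second equation as soon as `w` solves the first, for any constant `ρ`.

For `L ∈ 𝒩` there are three distinct roots `p₀, p₁, p₂` of some `X³ + X + λ` that differ by
multiples of `2πi / L`. Then `exp (pᵢ L)` has a common value `ρ`, and every combination `w` of the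
`exp (pᵢ x)` satisfies `w(x + L) = ρ w(x)`. Choosing for `w` the divided difference of
`p ↦ exp (p x)` at the `pᵢ` gives `w(0) = w′(0) = 0` and `w″(0) = 1`; quasi-periodicity carries
these data to `L` and makes `θ″(L) = w″(L) - ρ w″(0)` vanish.
-/

open Finset in
lemma sum_nodalWeight_mul_pow {ι F : Type*} [Field F] [DecidableEq ι] {s : Finset ι} {v : ι → F}
    (hv : Set.InjOn v s) {n : ℕ} (hn : n < #s) :
    ∑ i ∈ s, Lagrange.nodalWeight s v i * v i ^ n = if n + 1 = #s then 1 else 0 := by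
  have hdeg : (Polynomial.X ^ n : Polynomial F).degree < #s := by
    rw [Polynomial.degree_X_pow]
    exact_mod_cast hn
  have hsum := Lagrange.coeff_eq_sum hv hdeg
  simp only [Polynomial.coeff_X_pow, Polynomial.eval_pow, Polynomial.eval_X] at hsum
  have hiff : #s - 1 = n ↔ n + 1 = #s := by omega
  simp only [hiff] at hsum
  rw [hsum]
  simp only [Lagrange.nodalWeight, prod_inv_distrib, div_eq_inv_mul]

lemma eqOn_iteratedDeriv_Icc {E : Type*} [NormedAddCommGroup E] [NormedSpace ℝ E] {f g : ℝ → E}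
    {a b : ℝ} {n : ℕ} (hab : a < b) (hf : ContDiff ℝ n f) (hg : ContDiff ℝ n g)
    (hfg : EqOn f g (Icc a b)) : EqOn (iteratedDeriv n f) (iteratedDeriv n g) (Icc a b) := by
  intro x hx
  have hs := uniqueDiffOn_Icc hab
  rw [← iteratedDerivWithin_eq_iteratedDeriv hs hf.contDiffAt hx,
    ← iteratedDerivWithin_eq_iteratedDeriv hs hg.contDiffAt hx]
  exact iteratedDerivWithin_congr hfg hx

lemma not_forall_sub_add_eq_zero_of_iteratedDeriv_ne_zero {E : Type*} [NormedAddCommGroup E]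
    [NormedSpace ℝ E] {f g : ℝ → E} {a b : ℝ} {n : ℕ} (hab : a < b) (hf : ContDiff ℝ n f)
    (hfa : iteratedDeriv n f a ≠ 0) : ¬∀ x ∈ Icc a b, (f - g) x = 0 ∧ (f + g) x = 0 := by
  intro h
  have hf0 : EqOn f 0 (Icc a b) := fun x hx => by
    have hmean : f x = (1 / 2 : ℝ) • ((f - g) x + (f + g) x) := by
      simp only [Pi.sub_apply, Pi.add_apply]
      module
    rw [hmean, (h x hx).1, (h x hx).2, add_zero, smul_zero, Pi.zero_apply]
  apply hfa
  rw [eqOn_iteratedDeriv_Icc hab hf (g := 0) contDiff_const hf0 (left_mem_Icc.mpr hab.le),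
    iteratedDeriv_const_zero]

section KdV

variable {𝕜 E : Type*} [NontriviallyNormedField 𝕜] [NormedAddCommGroup E] [NormedSpace 𝕜 E]
  {f g w v : 𝕜 → E}

/-- The linear Korteweg–de Vries operator `f ↦ -f′ - f‴`, which is the off-diagonal entry of the
linearized Boussinesq system. -/
noncomputable def kdvOp (f : 𝕜 → E) : 𝕜 → E :=
  -deriv f - deriv (deriv (deriv f))

lemma kdvOp_eq_iteratedDeriv (f : 𝕜 → E) : kdvOp f = -iteratedDeriv 1 f - iteratedDeriv 3 f := by
  simp only [kdvOp, iteratedDeriv_succ, iteratedDeriv_zero]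

lemma kdvOp_add (hf : ContDiff 𝕜 3 f) (hg : ContDiff 𝕜 3 g) :
    kdvOp (f + g) = kdvOp f + kdvOp g := by
  have h1 : (1 : WithTop ℕ∞) ≤ 3 := by norm_num
  ext x
  simp only [kdvOp_eq_iteratedDeriv, Pi.add_apply, Pi.sub_apply, Pi.neg_apply,
    iteratedDeriv_add hf.contDiffAt hg.contDiffAt,
    iteratedDeriv_add (hf.of_le h1).contDiffAt (hg.of_le h1).contDiffAt]
  abel

lemma kdvOp_const_smul {R : Type*} [DivisionRing R] [Module R E] [SMulCommClass 𝕜 R E]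
    [ContinuousConstSMul R E] (c : R) (f : 𝕜 → E) : kdvOp (c • f) = c • kdvOp f := by
  ext x
  simp only [kdvOp_eq_iteratedDeriv, Pi.sub_apply, Pi.neg_apply, Pi.smul_apply,
    iteratedDeriv_const_smul_field, smul_sub, smul_neg]

lemma kdvOp_neg (f : 𝕜 → E) : kdvOp (-f) = -kdvOp f := by
  simpa only [neg_one_smul] using kdvOp_const_smul (-1 : 𝕜) f

lemma kdvOp_comp_const_sub (f : 𝕜 → E) (s : 𝕜) :
    kdvOp (fun x => f (s - x)) = fun x => -kdvOp f (s - x) := by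
  ext x
  simp only [kdvOp_eq_iteratedDeriv, iteratedDeriv_comp_const_sub, Pi.sub_apply, Pi.neg_apply,
    pow_one, Odd.neg_one_pow (by decide : Odd 3), neg_one_smul]
  abel

lemma kdvOp_add_eq_smul_sub {R : Type*} [Ring R] [Module R E] {lam : R} (hw : ContDiff 𝕜 3 w)
    (hv : ContDiff 𝕜 3 v) (hw' : kdvOp w = lam • w) (hv' : kdvOp v = -(lam • v)) :
    kdvOp (w + v) = lam • (w - v) := by
  rw [kdvOp_add hw hv, hw', hv', smul_sub, sub_eq_add_neg]

lemma kdvOp_sub_eq_smul_add {R : Type*} [Ring R] [Module R E] {lam : R} (hw : ContDiff 𝕜 3 w)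
    (hv : ContDiff 𝕜 3 v) (hw' : kdvOp w = lam • w) (hv' : kdvOp v = -(lam • v)) :
    kdvOp (w - v) = lam • (w + v) := by
  have hneg : kdvOp (-v) = -(lam • -v) := by rw [kdvOp_neg, hv', smul_neg]
  rw [sub_eq_add_neg, kdvOp_add_eq_smul_sub (v := -v) hw hv.neg hw' hneg, sub_neg_eq_add]

end KdV

section QuasiReflection

variable {𝕜 E R : Type*} [NontriviallyNormedField 𝕜] [NormedAddCommGroup E] [NormedSpace 𝕜 E]
  [Field R] [Module R E] {L : 𝕜} {ρ lam : R} {w : 𝕜 → E} {n : ℕ}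

/-- The reflection `x ↦ ρ w(L - x)` of `w` in `L / 2`, scaled so that for a `w` with multiplier `ρ`
over the period `L` its even derivatives agree with those of `w` at `L`. -/
def quasiReflection (L : 𝕜) (ρ : R) (w : 𝕜 → E) : 𝕜 → E :=
  ρ • fun x => w (L - x)

variable [SMulCommClass 𝕜 R E] [ContinuousConstSMul R E]

lemma contDiff_quasiReflection {n : WithTop ℕ∞} (hw : ContDiff 𝕜 n w) :
    ContDiff 𝕜 n (quasiReflection L ρ w) :=
  (hw.comp (contDiff_const.sub contDiff_id)).const_smul ρ

lemma kdvOp_quasiReflection (hw : kdvOp w = lam • w) :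
    kdvOp (quasiReflection L ρ w) = -(lam • quasiReflection L ρ w) := by
  rw [quasiReflection, kdvOp_const_smul, kdvOp_comp_const_sub, hw]
  ext x
  simp only [Pi.smul_apply, Pi.neg_apply, smul_neg, smul_comm ρ lam]

lemma iteratedDeriv_quasiReflection (n : ℕ) (x : 𝕜) :
    iteratedDeriv n (quasiReflection L ρ w) x = (-1 : 𝕜) ^ n • ρ • iteratedDeriv n w (L - x) := by
  rw [quasiReflection, iteratedDeriv_const_smul_field, iteratedDeriv_comp_const_sub]
  exact (smul_comm _ _ _).symm

lemma iteratedDeriv_eq_smul_of_add_eq_smul (hρ : ∀ x, w (x + L) = ρ • w x) (n : ℕ) (x : 𝕜) :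
    iteratedDeriv n w (x + L) = ρ • iteratedDeriv n w x := by
  rw [← iteratedDeriv_const_smul_field, ← congrFun (iteratedDeriv_comp_add_const n w L) x]
  exact congrArg (iteratedDeriv n · x) (funext hρ)

lemma iteratedDeriv_quasiReflection_right (hρ : ∀ x, w (x + L) = ρ • w x) (n : ℕ) :
    iteratedDeriv n (quasiReflection L ρ w) L = (-1 : 𝕜) ^ n • iteratedDeriv n w L := by
  rw [iteratedDeriv_quasiReflection, sub_self, ← iteratedDeriv_eq_smul_of_add_eq_smul hρ, zero_add]

lemma iteratedDeriv_sub_quasiReflection_right (hw : ContDiff 𝕜 n w)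
    (hρ : ∀ x, w (x + L) = ρ • w x) (hn : Even n) :
    iteratedDeriv n (w - quasiReflection L ρ w) L = 0 := by
  rw [iteratedDeriv_sub hw.contDiffAt (contDiff_quasiReflection hw).contDiffAt,
    iteratedDeriv_quasiReflection_right hρ, hn.neg_one_pow, one_smul, sub_self]

lemma iteratedDeriv_sub_add_quasiReflection_eq_zero (hw : ContDiff 𝕜 n w)
    (hρ : ∀ x, w (x + L) = ρ • w x) (h0 : iteratedDeriv n w 0 = 0) {x : 𝕜}
    (hx : x = 0 ∨ x = L) :
    iteratedDeriv n (w - quasiReflection L ρ w) x = 0 ∧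
      iteratedDeriv n (w + quasiReflection L ρ w) x = 0 := by
  have hL : iteratedDeriv n w L = 0 := by
    rw [← zero_add L, iteratedDeriv_eq_smul_of_add_eq_smul hρ, h0, smul_zero]
  have hwx : iteratedDeriv n w x = 0 := by rcases hx with rfl | rfl <;> assumption
  have hwLx : iteratedDeriv n w (L - x) = 0 := by
    rcases hx with rfl | rfl <;> simpa only [sub_zero, sub_self]
  have hr := (contDiff_quasiReflection (L := L) (ρ := ρ) hw).contDiffAt (x := x)
  simp only [iteratedDeriv_sub hw.contDiffAt hr, iteratedDeriv_add hw.contDiffAt hr,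
    iteratedDeriv_quasiReflection, hwx, hwLx, smul_zero, sub_zero, add_zero, and_self]

end QuasiReflection

section ExpSum

open Finset

variable {ι : Type*} [Fintype ι] {c p : ι → ℂ} {L : ℝ} {lam ρ : ℂ}

/-- The exponential sum with coefficients `c` and exponents `p`, as a function of a real variable;
with nodal weights as coefficients it is the divided difference of `q ↦ exp (q x)` at the `p i`. -/
noncomputable def expSum (c p : ι → ℂ) (x : ℝ) : ℂ :=
  ∑ i, c i * Complex.exp (p i * x)

lemma contDiff_expSum {n : WithTop ℕ∞} : ContDiff ℝ n (expSum c p) :=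
  ContDiff.sum fun _ _ =>
    contDiff_const.mul (contDiff_const.mul Complex.ofRealCLM.contDiff).cexp

lemma deriv_expSum : deriv (expSum c p) = expSum (c * p) p := by
  have hterm (i : ι) (x : ℝ) : HasDerivAt (fun y : ℝ => c i * Complex.exp (p i * y))
      ((c * p) i * Complex.exp (p i * x)) x := by
    have hlin : HasDerivAt (fun y : ℝ => p i * (y : ℂ)) (p i * 1) x :=
      (hasDerivAt_id x).ofReal_comp.const_mul (p i)
    exact (hlin.cexp.const_mul (c i)).congr_deriv (by rw [Pi.mul_apply]; ring)
  funext x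
  exact (HasDerivAt.fun_sum fun i _ => hterm i x).deriv

lemma iteratedDeriv_expSum (n : ℕ) : iteratedDeriv n (expSum c p) = expSum (c * p ^ n) p := by
  induction n with
  | zero => rw [iteratedDeriv_zero, pow_zero, mul_one]
  | succ n ih => rw [iteratedDeriv_succ, ih, deriv_expSum, mul_assoc, pow_succ]

lemma kdvOp_expSum (hroot : ∀ i, p i ^ 3 + p i + lam = 0) :
    kdvOp (expSum c p) = lam • expSum c p := by
  ext x
  simp only [kdvOp_eq_iteratedDeriv, iteratedDeriv_expSum, expSum, Pi.sub_apply, Pi.neg_apply,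
    Pi.smul_apply, Pi.mul_apply, Pi.pow_apply, smul_eq_mul, mul_sum, ← sum_neg_distrib,
    ← sum_sub_distrib]
  refine sum_congr rfl fun i _ => ?_
  linear_combination -(c i * Complex.exp (p i * x)) * hroot i

lemma expSum_add_of_exp_eq (hexp : ∀ i, Complex.exp (p i * L) = ρ) (x : ℝ) :
    expSum c p (x + L) = ρ • expSum c p x := by
  simp only [expSum, Complex.ofReal_add, mul_add, Complex.exp_add, hexp, smul_eq_mul, mul_sum]
  exact sum_congr rfl fun i _ => by ring

lemma iteratedDeriv_expSum_nodalWeight_zero [DecidableEq ι] (hp : Function.Injective p) {n : ℕ}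
    (hn : n < Fintype.card ι) :
    iteratedDeriv n (expSum (Lagrange.nodalWeight univ p) p) 0 =
      if n + 1 = Fintype.card ι then 1 else 0 := by
  rw [← card_univ] at hn ⊢
  rw [iteratedDeriv_expSum, ← sum_nodalWeight_mul_pow hp.injOn hn]
  simp only [expSum, Pi.mul_apply, Pi.pow_apply, Complex.ofReal_zero, mul_zero, Complex.exp_zero,
    mul_one]

end ExpSum

section Exponents

/-- The three exponents attached to the pair `(k, l)`: they sum to zero and their consecutive
differences are `k * t` and `l * t`. -/
noncomputable def criticalExponent (k l t : ℂ) : Fin 3 → ℂ :=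
  ![-(2 * k + l) / 3 * t, (k - l) / 3 * t, (k + 2 * l) / 3 * t]

variable {k l t : ℂ}

lemma criticalExponent_injective (hk : k ≠ 0) (hl : l ≠ 0) (hkl : k + l ≠ 0) (ht : t ≠ 0) :
    Function.Injective (criticalExponent k l t) := by
  have h01 : -(2 * k + l) / 3 * t ≠ (k - l) / 3 * t := fun h =>
    mul_ne_zero hk ht (by linear_combination -h)
  have h12 : (k - l) / 3 * t ≠ (k + 2 * l) / 3 * t := fun h =>
    mul_ne_zero hl ht (by linear_combination -h)
  have h02 : -(2 * k + l) / 3 * t ≠ (k + 2 * l) / 3 * t := fun h =>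
    mul_ne_zero hkl ht (by linear_combination -h)
  intro i j hij
  fin_cases i <;> fin_cases j <;> simp_all [criticalExponent]

lemma criticalExponent_isRoot (ht : t ^ 2 * (k ^ 2 + k * l + l ^ 2) = -3) (i : Fin 3) :
    criticalExponent k l t i ^ 3 + criticalExponent k l t i +
      (2 * k + l) * (k - l) * (k + 2 * l) / 27 * t ^ 3 = 0 := by
  have hcubic : criticalExponent k l t i ^ 3 + (2 * k + l) * (k - l) * (k + 2 * l) / 27 * t ^ 3 =
      criticalExponent k l t i / 3 * (t ^ 2 * (k ^ 2 + k * l + l ^ 2)) := by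
    fin_cases i <;> simp only [criticalExponent, Fin.zero_eta, Fin.mk_one, Fin.reduceFinMk,
      Matrix.cons_val] <;> ring
  rw [ht] at hcubic
  linear_combination hcubic

lemma exp_criticalExponent_mul {k l : ℤ} {L : ℂ} (htL : t * L = 2 * Real.pi * Complex.I)
    (i : Fin 3) : Complex.exp (criticalExponent k l t i * L) =
      Complex.exp (criticalExponent k l t 0 * L) := by
  rw [Complex.exp_eq_exp_iff_exists_int]
  fin_cases i
  · exact ⟨0, by simp⟩
  · exact ⟨k, by
      simp only [criticalExponent, Fin.mk_one, Matrix.cons_val]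
      linear_combination (k : ℂ) * htL⟩
  · exact ⟨k + l, by
      simp only [criticalExponent, Fin.reduceFinMk, Matrix.cons_val, Int.cast_add]
      linear_combination ((k : ℂ) + l) * htL⟩

end Exponents

section CriticalLength

variable {L : ℝ}

lemma pos_of_mem_criticalN (hL : L ∈ criticalN) : 0 < L := by
  obtain ⟨k, l, hk, hl, rfl⟩ := hL
  positivity

lemma exists_three_mul_sq_eq_of_mem_criticalN (hL : L ∈ criticalN) : ∃ k l : ℕ, 0 < k ∧ 0 < l ∧
    3 * L ^ 2 = 4 * Real.pi ^ 2 * ((k : ℝ) ^ 2 + k * l + (l : ℝ) ^ 2) := by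
  obtain ⟨k, l, hk, hl, rfl⟩ := hL
  refine ⟨k, l, hk, hl, ?_⟩
  rw [mul_pow, div_pow, Real.sq_sqrt (by positivity), Real.sq_sqrt (by positivity)]
  ring

lemma exists_exponents_of_mem_criticalN (hL : L ∈ criticalN) :
    ∃ (p : Fin 3 → ℂ) (lam ρ : ℂ), Function.Injective p ∧ (∀ i, p i ^ 3 + p i + lam = 0) ∧
      ∀ i, Complex.exp (p i * L) = ρ := by
  obtain ⟨k, l, hk, hl, hkl⟩ := exists_three_mul_sq_eq_of_mem_criticalN hL
  have hL0 : (L : ℂ) ≠ 0 := by exact_mod_cast (pos_of_mem_criticalN hL).ne'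
  have hklC : 3 * (L : ℂ) ^ 2 = 4 * (Real.pi : ℂ) ^ 2 * ((k : ℂ) ^ 2 + k * l + (l : ℂ) ^ 2) := by
    exact_mod_cast hkl
  have ht : (2 * Real.pi * Complex.I / L) ^ 2 * ((k : ℂ) ^ 2 + k * l + (l : ℂ) ^ 2) = -3 := by
    rw [div_pow, mul_pow, Complex.I_sq, div_mul_eq_mul_div, div_eq_iff (pow_ne_zero 2 hL0)]
    linear_combination hklC
  refine ⟨criticalExponent k l (2 * Real.pi * Complex.I / L), _, _,
    criticalExponent_injective ?_ ?_ ?_ ?_, criticalExponent_isRoot ht,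
    fun i => exp_criticalExponent_mul (k := k) (l := l) (div_mul_cancel₀ _ hL0) i⟩
  · exact_mod_cast hk.ne'
  · exact_mod_cast hl.ne'
  · exact_mod_cast (Nat.add_pos_left hk l).ne'
  · exact div_ne_zero Complex.two_pi_I_ne_zero hL0

end CriticalLength

/-- If `L ∈ 𝒩`, the spectral problem for the linearized Boussinesq system with boundary
conditions `θ(0) = θ(L) = θ′(0) = θ′(L) = 0`, `u(0) = u(L) = u′(L) = 0` admits a nontrivial
solution satisfying the additional condition `deriv (deriv θ) L = 0`. -/
theorem statement_2 (L : ℝ) (hLN : L ∈ criticalN) :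
    ∃ (lam : ℂ) (θ u : ℝ → ℂ),
      ContDiff ℝ 3 θ ∧ ContDiff ℝ 3 u ∧
      ¬(∀ x ∈ Icc (0 : ℝ) L, θ x = 0 ∧ u x = 0) ∧
      (∀ x ∈ Icc (0 : ℝ) L, -deriv u x - deriv (deriv (deriv u)) x = lam * θ x) ∧
      (∀ x ∈ Icc (0 : ℝ) L, -deriv θ x - deriv (deriv (deriv θ)) x = lam * u x) ∧
      θ 0 = 0 ∧ θ L = 0 ∧ deriv θ 0 = 0 ∧ deriv θ L = 0 ∧
      u 0 = 0 ∧ u L = 0 ∧ deriv u L = 0 ∧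
      deriv (deriv θ) L = 0 := by
  obtain ⟨p, lam, ρ, hp, hroot, hexp⟩ := exists_exponents_of_mem_criticalN hLN
  set w := expSum (Lagrange.nodalWeight Finset.univ p) p
  set v := quasiReflection L ρ w
  have hw (n : ℕ) : ContDiff ℝ n w := contDiff_expSum
  have hv : ContDiff ℝ 3 v := contDiff_quasiReflection (hw 3)
  have hw_eig : kdvOp w = lam • w := kdvOp_expSum hroot
  have hv_eig : kdvOp v = -(lam • v) := kdvOp_quasiReflection hw_eig
  have hρ : ∀ x, w (x + L) = ρ • w x := expSum_add_of_exp_eq hexp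
  have hjet {n : ℕ} (hn : n < 3) : iteratedDeriv n w 0 = if n + 1 = 3 then 1 else 0 :=
    iteratedDeriv_expSum_nodalWeight_zero hp hn
  have hw2 : iteratedDeriv 2 w 0 ≠ 0 := (hjet (by norm_num)).trans_ne one_ne_zero
  have hend {n : ℕ} (hn : n < 2) (x : ℝ) (hx : x = 0 ∨ x = L) :
      iteratedDeriv n (w - v) x = 0 ∧ iteratedDeriv n (w + v) x = 0 :=
    iteratedDeriv_sub_add_quasiReflection_eq_zero (hw n) hρ
      ((hjet (by omega)).trans (if_neg (by omega))) hx
  have hend0 := hend zero_lt_two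
  have hend1 := hend one_lt_two
  have hθ2 := iteratedDeriv_sub_quasiReflection_right (hw 2) hρ even_two
  simp only [iteratedDeriv_succ, iteratedDeriv_one, iteratedDeriv_zero] at hend0 hend1 hθ2
  exact ⟨lam, w - v, w + v, (hw 3).sub hv, (hw 3).add hv,
    not_forall_sub_add_eq_zero_of_iteratedDeriv_ne_zero (pos_of_mem_criticalN hLN) (hw 2) hw2,
    fun x _ => congrFun (kdvOp_add_eq_smul_sub (hw 3) hv hw_eig hv_eig) x,
    fun x _ => congrFun (kdvOp_sub_eq_smul_add (hw 3) hv hw_eig hv_eig) x,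
    (hend0 0 (.inl rfl)).1, (hend0 L (.inr rfl)).1, (hend1 0 (.inl rfl)).1, (hend1 L (.inr rfl)).1,
    (hend0 0 (.inl rfl)).2, (hend0 L (.inr rfl)).2, (hend1 L (.inr rfl)).2, hθ2⟩
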